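/- Fix n ≥ 2 and j ∈ {2,…,n}. The polynomial P(x_1,…,x_n) := ∑_{π∈S_n} ( ∑_{k=j}^n x_k − ∑_{k=1}^{j−1} x_k · ∑_{i=1}^k 1[π(i)>π(j)] ) · ∏_{l=1}^n (∑_{h=l}^n x_h)^{n−π(l)} has all coefficients nonnegative; in particular P(x) ≥ 0 for all x ∈ R_{≥0}^n. -/

import Mathlib

open Finset

/-- The polynomial `P(x) = ∑_π (∑_{k=j}^n x_k − ∑_{k=1}^{j−1} x_k·#{i≤k : π(i)>π(j)})
· ∏_l (∑_{h≥l} x_h)^{n−π(l)}` (positions 0-indexed). -/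
noncomputable def Ppoly (n : ℕ) (j : Fin n) : MvPolynomial (Fin n) ℝ :=
  ∑ π : Equiv.Perm (Fin n),
    ((∑ k ∈ Finset.Ici j, MvPolynomial.X k) -
      ∑ k ∈ Finset.Iio j,
        ((((Finset.Iic k).filter (fun i => π j < π i)).card : MvPolynomial (Fin n) ℝ) *
          MvPolynomial.X k)) *
    ∏ l, (∑ h ∈ Finset.Ici l, MvPolynomial.X h) ^ (n - 1 - (π l : ℕ))

/-!
Write `y l = ∑_{h ≥ l} x h` and let `σ l = n - 1 - π l` be the exponent of `y l`. Then
`P = ∑_σ (y j - ∑_{i < j, σ i < σ j} (y i - y j)) y ^ σ`, so with `L σ = #{i < j | σ i < σ j}` the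
claim becomes `∑_σ ∑_{i < j, σ i < σ j} y i * y ^ σ ≤ ∑_σ (L σ + 1) * y j * y ^ σ` for the
coefficientwise order, in which `y` is nonnegative and antitone.

Let `m` be the position before `j` carrying the largest exponent below `σ j`. Pairing `σ` with
`σ ∘ (m i)`, the rearrangement inequality lets us replace every `y i` on the left by `y m`; this
gives `L σ` copies of `y m * y ^ σ`. Since `σ m + 1 ≤ σ j` and `y j ≤ y m`, exchanging exponents
bounds `y m * y ^ σ` by `y j * y ^ (σ ∘ (m j))`. Finally `σ ↦ σ ∘ (m j)` is injective and decreases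
`L` by one.
-/

section Rearrangement

variable {ι R : Type*}

lemma sum_sum_le_sum_sum_of_add_le [AddCommMonoid R] [PartialOrder R] [IsOrderedAddMonoid R]
    {s : Finset ι} {f g : ι → ι → R} (hdiag : ∀ i ∈ s, f i i ≤ g i i)
    (hoff : ∀ i ∈ s, ∀ k ∈ s, i ≠ k → f i k + f k i ≤ g i k + g k i) :
    ∑ i ∈ s, ∑ k ∈ s, f i k ≤ ∑ i ∈ s, ∑ k ∈ s, g i k := by
  classical
  have sum_sum_insert (a : ι) (t : Finset ι) (ha : a ∉ t) (h : ι → ι → R) :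
      ∑ i ∈ insert a t, ∑ k ∈ insert a t, h i k =
        h a a + ∑ k ∈ t, (h a k + h k a) + ∑ i ∈ t, ∑ k ∈ t, h i k := by
    simp only [sum_insert ha, sum_add_distrib]
    abel
  induction s using Finset.induction_on with
  | empty => simp
  | insert a t ha ih =>
    rw [sum_sum_insert a t ha, sum_sum_insert a t ha]
    have hcross : ∑ k ∈ t, (f a k + f k a) ≤ ∑ k ∈ t, (g a k + g k a) :=
      sum_le_sum fun k hk ↦ hoff a (mem_insert_self a t) k (mem_insert_of_mem hk)
        (ne_of_mem_of_not_mem hk ha).symm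
    have hrest := ih (fun i hi ↦ hdiag i (mem_insert_of_mem hi))
      fun i hi k hk ↦ hoff i (mem_insert_of_mem hi) k (mem_insert_of_mem hk)
    exact add_le_add (add_le_add (hdiag a (mem_insert_self a t)) hcross) hrest

lemma pow_mul_pow_le_pow_mul_pow [CommSemiring R] [PartialOrder R] [IsOrderedRing R]
    {u v : R} (hv : 0 ≤ v) (hvu : v ≤ u) {a b : ℕ} (hab : a ≤ b) :
    u ^ a * v ^ b ≤ u ^ b * v ^ a := by
  obtain ⟨d, rfl⟩ := Nat.exists_eq_add_of_le hab
  have hu : 0 ≤ u := hv.trans hvu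
  calc u ^ a * v ^ (a + d) = u ^ a * v ^ a * v ^ d := by ring
    _ ≤ u ^ a * v ^ a * u ^ d := by gcongr
    _ = u ^ (a + d) * v ^ a := by ring

variable [Fintype ι] [DecidableEq ι] {y : ι → R} {e : ι → ℕ} {p q : ι}

lemma prod_pow_eq_mul_prod_compl [CommMonoid R] (y : ι → R) (e : ι → ℕ) (hpq : p ≠ q) :
    ∏ l, y l ^ e l = y p ^ e p * y q ^ e q * ∏ l ∈ {p, q}ᶜ, y l ^ e l := by
  rw [← prod_mul_prod_compl {p, q}, prod_pair hpq]

lemma prod_pow_swap_eq_mul_prod_compl [CommMonoid R] (y : ι → R) (e : ι → ℕ) (hpq : p ≠ q) :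
    ∏ l, y l ^ e (Equiv.swap p q l) = y p ^ e q * y q ^ e p * ∏ l ∈ {p, q}ᶜ, y l ^ e l := by
  have hcompl : ∏ l ∈ {p, q}ᶜ, y l ^ e (Equiv.swap p q l) = ∏ l ∈ {p, q}ᶜ, y l ^ e l := by
    refine prod_congr rfl fun l hl ↦ ?_
    simp only [mem_compl, mem_insert, mem_singleton, not_or] at hl
    rw [Equiv.swap_apply_of_ne_of_ne hl.1 hl.2]
  rw [← prod_mul_prod_compl {p, q}, prod_pair hpq, hcompl, Equiv.swap_apply_left,
    Equiv.swap_apply_right]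

lemma prod_pow_le_prod_pow_swap [CommSemiring R] [PartialOrder R] [IsOrderedRing R]
    (hy : ∀ l, 0 ≤ y l) (hqp : y q ≤ y p) (he : e p ≤ e q) :
    ∏ l, y l ^ e l ≤ ∏ l, y l ^ e (Equiv.swap p q l) := by
  obtain rfl | hpq := eq_or_ne p q
  · simp
  rw [prod_pow_eq_mul_prod_compl y e hpq, prod_pow_swap_eq_mul_prod_compl y e hpq]
  exact mul_le_mul_of_nonneg_right (pow_mul_pow_le_pow_mul_pow (hy q) hqp he)
    (prod_nonneg fun l _ ↦ pow_nonneg (hy l) _)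

lemma mul_prod_pow_le_mul_prod_pow_swap [CommSemiring R] [PartialOrder R] [IsOrderedRing R]
    (hy : ∀ l, 0 ≤ y l) (hqp : y q ≤ y p) (he : e p < e q) :
    y p * ∏ l, y l ^ e l ≤ y q * ∏ l, y l ^ e (Equiv.swap p q l) := by
  have hpq : p ≠ q := ne_of_apply_ne e he.ne
  rw [prod_pow_eq_mul_prod_compl y e hpq, prod_pow_swap_eq_mul_prod_compl y e hpq]
  set r := ∏ l ∈ {p, q}ᶜ, y l ^ e l
  have hr : 0 ≤ r := prod_nonneg fun l _ ↦ pow_nonneg (hy l) _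
  calc y p * (y p ^ e p * y q ^ e q * r) = y p ^ (e p + 1) * y q ^ e q * r := by ring
    _ ≤ y p ^ e q * y q ^ (e p + 1) * r :=
      mul_le_mul_of_nonneg_right (pow_mul_pow_le_pow_mul_pow (hy q) hqp he) hr
    _ = y q * (y p ^ e q * y q ^ e p * r) := by ring

lemma mul_prod_pow_add_mul_prod_pow_swap_le [CommRing R] [PartialOrder R] [IsOrderedRing R]
    (hy : ∀ l, 0 ≤ y l) (hpq : y p ≤ y q ∨ y q ≤ y p) (he : e p ≤ e q) :
    y p * ∏ l, y l ^ e l + y q * ∏ l, y l ^ e (Equiv.swap p q l) ≤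
      y q * ∏ l, y l ^ e l + y p * ∏ l, y l ^ e (Equiv.swap p q l) := by
  rw [add_comm (y q * ∏ l, y l ^ e l)]
  rcases hpq with h | h
  · have hswap : ∏ l, y l ^ e (Equiv.swap p q l) ≤ ∏ l, y l ^ e l := by
      simpa [Equiv.swap_comm q p] using
        prod_pow_le_prod_pow_swap (e := e ∘ Equiv.swap p q) hy h (by simpa using he)
    exact mul_add_mul_le_mul_add_mul h hswap
  · exact mul_add_mul_le_mul_add_mul' h (prod_pow_le_prod_pow_swap hy h he)

end Rearrangement

section Below

variable {ι α : Type*} [LinearOrder α] {s : Finset ι} {j : ι} {σ : ι → α}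

/-- The positions in `s` whose value under `σ` is below the value at `j`. For `s = Iio j` these are
the `i < j` with `π i > π j` of the statement, `σ` being the reverse of `π`. -/
def below (s : Finset ι) (j : ι) (σ : ι → α) : Finset ι := {i ∈ s | σ i < σ j}

@[simp]
lemma mem_below {i : ι} : i ∈ below s j σ ↔ i ∈ s ∧ σ i < σ j := mem_filter

/-- The values `σ a < σ b` are adjacent among the values on `s`. For `b = j` (resp. `a = j`) the
other position is the predecessor (resp. successor) of `j` by value; `a` and `b` need not lie in
`s`. -/
def IsConsecutive (s : Finset ι) (σ : ι → α) (a b : ι) : Prop :=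
  σ a < σ b ∧ ∀ i ∈ s, ¬ (σ a < σ i ∧ σ i < σ b)

lemma exists_isConsecutive_of_below_nonempty (h : (below s j σ).Nonempty) :
    ∃ m ∈ s, IsConsecutive s σ m j := by
  obtain ⟨m, hm, hmax⟩ := exists_max_image (below s j σ) σ h
  rw [mem_below] at hm
  exact ⟨m, hm.1, hm.2, fun i hi h ↦ h.1.not_ge (hmax i (mem_below.2 ⟨hi, h.2⟩))⟩

namespace IsConsecutive

variable {a b c : ι}

lemma apply_le_left (h : IsConsecutive s σ a b) (hc : c ∈ s) (hcb : σ c < σ b) : σ c ≤ σ a :=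
  not_lt.1 fun hac ↦ h.2 c hc ⟨hac, hcb⟩

lemma apply_right_le (h : IsConsecutive s σ a b) (hc : c ∈ s) (hac : σ a < σ c) : σ b ≤ σ c :=
  not_lt.1 fun hcb ↦ h.2 c hc ⟨hac, hcb⟩

lemma left_unique (hσ : σ.Injective) (ha : a ∈ s) (hc : c ∈ s) (hab : IsConsecutive s σ a b)
    (hcb : IsConsecutive s σ c b) : a = c :=
  hσ <| (hcb.apply_le_left ha hab.1).antisymm (hab.apply_le_left hc hcb.1)

lemma right_unique (hσ : σ.Injective) (hb : b ∈ s) (hc : c ∈ s) (hab : IsConsecutive s σ a b)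
    (hac : IsConsecutive s σ a c) : b = c :=
  hσ <| (hab.apply_right_le hc hac.1).antisymm (hac.apply_right_le hb hab.1)

end IsConsecutive

variable [DecidableEq ι] {m i : ι}

lemma isConsecutive_comp_swap_iff (hj : j ∉ s) :
    IsConsecutive s (σ ∘ Equiv.swap m j) j m ↔ IsConsecutive s σ m j := by
  simp only [IsConsecutive, Function.comp_apply, Equiv.swap_apply_left, Equiv.swap_apply_right]
  refine and_congr_right fun _ ↦ forall₂_congr fun i hi ↦ ?_
  obtain rfl | him := eq_or_ne i m
  · simp
  · rw [Equiv.swap_apply_of_ne_of_ne him (ne_of_mem_of_not_mem hi hj)]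

lemma isConsecutive_comp_swap_iff_of_mem (hj : j ∉ s) (hm : m ∈ s) (hi : i ∈ s) :
    IsConsecutive s (σ ∘ Equiv.swap i m) i j ↔ IsConsecutive s σ m j := by
  have hjfix : Equiv.swap i m j = j := Equiv.swap_apply_of_ne_of_ne
    (ne_of_mem_of_not_mem hi hj).symm (ne_of_mem_of_not_mem hm hj).symm
  have hmaps (k : ι) : Equiv.swap i m k ∈ s ↔ k ∈ s := by
    rw [Equiv.swap_apply_def]
    split_ifs <;> simp_all
  simp only [IsConsecutive, Function.comp_apply, Equiv.swap_apply_left, hjfix]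
  refine and_congr_right fun _ ↦ (Equiv.swap i m).forall_congr fun {k} ↦ ?_
  rw [hmaps]

lemma card_below_comp_swap_add_one (hσ : σ.Injective) (hj : j ∉ s) (hm : m ∈ s)
    (h : IsConsecutive s σ m j) :
    #(below s j (σ ∘ Equiv.swap m j)) + 1 = #(below s j σ) := by
  have herase : below s j (σ ∘ Equiv.swap m j) = (below s j σ).erase m := by
    ext i
    simp only [mem_below, mem_erase, Function.comp_apply, Equiv.swap_apply_right]
    obtain rfl | him := eq_or_ne i m
    · simp [h.1.le]
    rw [and_iff_right him]
    refine and_congr_right fun hi ↦ ?_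
    rw [Equiv.swap_apply_of_ne_of_ne him (ne_of_mem_of_not_mem hi hj)]
    exact ⟨fun hlt ↦ hlt.trans h.1, fun hlt ↦ (h.apply_le_left hi hlt).lt_of_ne (hσ.ne him)⟩
  rw [herase, card_erase_add_one (mem_below.2 ⟨hm, h.1⟩)]

end Below

section PermSum

variable {n : ℕ} {R : Type*} {s : Finset (Fin n)} {j : Fin n} {y : Fin n → R}

/-- The monomial `y ^ σ`, with exponents the values of `σ` counted from `0`. -/
def permMonomial [CommMonoid R] (y : Fin n → R) (σ : Equiv.Perm (Fin n)) : R :=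
  ∏ l, y l ^ (σ l : ℕ)

lemma permMonomial_nonneg [CommSemiring R] [PartialOrder R] [IsOrderedRing R]
    (hy : ∀ l, 0 ≤ y l) (σ : Equiv.Perm (Fin n)) : 0 ≤ permMonomial y σ :=
  prod_nonneg fun l _ ↦ pow_nonneg (hy l) _

open Classical in
/-- The permutations whose values at `a` and `b` are consecutive relative to `s`. -/
noncomputable def consecutivePerms (s : Finset (Fin n)) (a b : Fin n) :
    Finset (Equiv.Perm (Fin n)) :=
  {σ : Equiv.Perm (Fin n) | IsConsecutive s σ a b}

@[simp]
lemma mem_consecutivePerms {a b : Fin n} {σ : Equiv.Perm (Fin n)} :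
    σ ∈ consecutivePerms s a b ↔ IsConsecutive s σ a b := by
  simp [consecutivePerms]

lemma sum_below_eq_sum_consecutivePerms [AddCommMonoid R]
    (f : Fin n → Equiv.Perm (Fin n) → R) :
    ∑ σ : Equiv.Perm (Fin n), ∑ i ∈ below s j σ, f i σ =
      ∑ m ∈ s, ∑ σ ∈ consecutivePerms s m j, ∑ i ∈ below s j σ, f i σ := by
  rw [← sum_biUnion]
  · refine (sum_subset (subset_univ _) fun σ _ hσ ↦ ?_).symm
    have hempty : below s j σ = ∅ := by
      contrapose! hσ
      simpa using exists_isConsecutive_of_below_nonempty hσ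
    rw [hempty, sum_empty]
  · refine fun a ha c hc hac ↦ disjoint_left.2 fun σ hσa hσc ↦ hac ?_
    rw [mem_consecutivePerms] at hσa hσc
    exact hσa.left_unique σ.injective ha hc hσc

lemma sum_consecutivePerms_le_sum [AddCommMonoid R] [PartialOrder R] [IsOrderedAddMonoid R]
    {f : Equiv.Perm (Fin n) → R} (hf : ∀ σ, 0 ≤ f σ) :
    ∑ m ∈ s, ∑ σ ∈ consecutivePerms s j m, f σ ≤ ∑ σ, f σ := by
  rw [← sum_biUnion]
  · exact sum_le_univ_sum_of_nonneg hf
  · refine fun b hb c hc hbc ↦ disjoint_left.2 fun σ hσb hσc ↦ hbc ?_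
    rw [mem_consecutivePerms] at hσb hσc
    exact hσb.right_unique σ.injective hb hc hσc

lemma sum_consecutivePerms_mul_swap [AddCommMonoid R] (hj : j ∉ s) (m : Fin n)
    (f : Equiv.Perm (Fin n) → R) :
    ∑ σ ∈ consecutivePerms s m j, f (σ * Equiv.swap m j) =
      ∑ σ ∈ consecutivePerms s j m, f σ :=
  sum_equiv (Equiv.mulRight (Equiv.swap m j))
    (fun σ ↦ by simp [isConsecutive_comp_swap_iff hj]) fun _ _ ↦ rfl

lemma sum_consecutivePerms_filter_mul_swap [AddCommMonoid R] (hj : j ∉ s) {m i : Fin n}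
    (hm : m ∈ s) (hi : i ∈ s) (f : Equiv.Perm (Fin n) → R) :
    ∑ σ ∈ consecutivePerms s m j with σ i < σ j, f (σ * Equiv.swap i m) =
      ∑ σ ∈ consecutivePerms s i j with σ m < σ j, f σ := by
  have hjfix : Equiv.swap i m j = j := Equiv.swap_apply_of_ne_of_ne
    (ne_of_mem_of_not_mem hi hj).symm (ne_of_mem_of_not_mem hm hj).symm
  exact sum_equiv (Equiv.mulRight (Equiv.swap i m))
    (fun σ ↦ by simp [isConsecutive_comp_swap_iff_of_mem hj hm hi, hjfix]) fun _ _ ↦ rfl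

variable [CommRing R] [PartialOrder R] [IsOrderedRing R]

lemma sum_below_mul_permMonomial_le_sum_left_mul (hy : ∀ l, 0 ≤ y l) (hj : j ∉ s)
    (hchain : IsChain (· ≤ ·) (y '' s)) :
    ∑ m ∈ s, ∑ σ ∈ consecutivePerms s m j, ∑ i ∈ below s j σ, y i * permMonomial y σ ≤
      ∑ m ∈ s, ∑ σ ∈ consecutivePerms s m j, ∑ _i ∈ below s j σ, y m * permMonomial y σ := by
  have sum_comm_below (f : Fin n → Equiv.Perm (Fin n) → R) (m : Fin n) :
      ∑ σ ∈ consecutivePerms s m j, ∑ i ∈ below s j σ, f i σ =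
        ∑ i ∈ s, ∑ σ ∈ consecutivePerms s m j with σ i < σ j, f i σ :=
    sum_comm' fun σ i ↦ by
      rw [mem_below, mem_filter]
      tauto
  simp only [sum_comm_below]
  refine sum_sum_le_sum_sum_of_add_le (fun _ _ ↦ le_rfl) fun m hm i hi _ ↦ ?_
  rw [← sum_consecutivePerms_filter_mul_swap hj hm hi,
    ← sum_consecutivePerms_filter_mul_swap hj hm hi, ← sum_add_distrib, ← sum_add_distrib]
  refine sum_le_sum fun σ hσ ↦ ?_
  obtain ⟨hcons, hij⟩ := mem_filter.1 hσ
  exact mul_prod_pow_add_mul_prod_pow_swap_le hy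
    (hchain.total (Set.mem_image_of_mem y hi) (Set.mem_image_of_mem y hm))
    ((mem_consecutivePerms.1 hcons).apply_le_left hi hij)

theorem sum_below_mul_permMonomial_le (hy : ∀ l, 0 ≤ y l) (hj : j ∉ s)
    (hmin : ∀ i ∈ s, y j ≤ y i) (hchain : IsChain (· ≤ ·) (y '' s)) :
    ∑ σ : Equiv.Perm (Fin n), ∑ i ∈ below s j σ, y i * permMonomial y σ ≤
      ∑ σ : Equiv.Perm (Fin n), (#(below s j σ) + 1 : ℕ) * (y j * permMonomial y σ) := by
  let F (σ : Equiv.Perm (Fin n)) : R := (#(below s j σ) + 1 : ℕ) * (y j * permMonomial y σ)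
  calc ∑ σ : Equiv.Perm (Fin n), ∑ i ∈ below s j σ, y i * permMonomial y σ
    _ = ∑ m ∈ s, ∑ σ ∈ consecutivePerms s m j, ∑ i ∈ below s j σ, y i * permMonomial y σ :=
      sum_below_eq_sum_consecutivePerms _
    _ ≤ ∑ m ∈ s, ∑ σ ∈ consecutivePerms s m j, ∑ _i ∈ below s j σ, y m * permMonomial y σ :=
      sum_below_mul_permMonomial_le_sum_left_mul hy hj hchain
    _ ≤ ∑ m ∈ s, ∑ σ ∈ consecutivePerms s m j,
          ∑ _i ∈ below s j σ, y j * permMonomial y (σ * Equiv.swap m j) := by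
      refine sum_le_sum fun m hm ↦ sum_le_sum fun σ hσ ↦ sum_le_sum fun _ _ ↦ ?_
      exact mul_prod_pow_le_mul_prod_pow_swap hy (hmin m hm) (mem_consecutivePerms.1 hσ).1
    _ = ∑ m ∈ s, ∑ σ ∈ consecutivePerms s m j, F (σ * Equiv.swap m j) := by
      refine sum_congr rfl fun m hm ↦ sum_congr rfl fun σ hσ ↦ ?_
      simp only [F]
      rw [sum_const, nsmul_eq_mul, Equiv.Perm.coe_mul,
        card_below_comp_swap_add_one σ.injective hj hm (mem_consecutivePerms.1 hσ)]
    _ = ∑ m ∈ s, ∑ σ ∈ consecutivePerms s j m, F σ :=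
      sum_congr rfl fun m _ ↦ sum_consecutivePerms_mul_swap hj m F
    _ ≤ ∑ σ, F σ :=
      sum_consecutivePerms_le_sum fun σ ↦
        mul_nonneg (Nat.cast_nonneg _) (mul_nonneg (hy j) (permMonomial_nonneg hy σ))

end PermSum

section TailSum

variable {ι R : Type*} [LinearOrder ι] [LocallyFiniteOrderTop ι]

/-- The tail sums `∑_{h ≥ l} x h`, i.e. the probabilities `p l` of the paper in terms of their
successive differences `x`. -/
def tailSum [AddCommMonoid R] (x : ι → R) (l : ι) : R := ∑ h ∈ Ici l, x h

section Order

variable [AddCommMonoid R] [PartialOrder R] [IsOrderedAddMonoid R] {x : ι → R}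

lemma tailSum_nonneg (hx : ∀ i, 0 ≤ x i) (l : ι) : 0 ≤ tailSum x l :=
  sum_nonneg fun i _ ↦ hx i

lemma antitone_tailSum (hx : ∀ i, 0 ≤ x i) : Antitone (tailSum x) := fun _ _ h ↦
  sum_le_sum_of_subset_of_nonneg (Ici_subset_Ici.2 h) fun i _ _ ↦ hx i

end Order

variable [LocallyFiniteOrder ι]

lemma tailSum_sub_tailSum [AddCommGroup R] (x : ι → R) {i j : ι} (hij : i ≤ j) :
    tailSum x i - tailSum x j = ∑ k ∈ Ico i j, x k := by
  have hsdiff : Ici i \ Ici j = Ico i j := by ext; simp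
  rw [tailSum, tailSum, ← sum_sdiff_eq_sub (Ici_subset_Ici.2 hij), hsdiff]

lemma sum_below_tailSum_sub [LocallyFiniteOrderBot ι] {α : Type*} [LinearOrder α] [Ring R]
    (x : ι → R) (j : ι) (σ : ι → α) :
    ∑ i ∈ below (Iio j) j σ, (tailSum x i - tailSum x j) =
      ∑ k ∈ Iio j, (#{i ∈ Iic k | σ i < σ j} : R) * x k := by
  calc ∑ i ∈ below (Iio j) j σ, (tailSum x i - tailSum x j)
    _ = ∑ i ∈ below (Iio j) j σ, ∑ k ∈ Ico i j, x k :=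
      sum_congr rfl fun i hi ↦ tailSum_sub_tailSum x (mem_Iio.1 (mem_below.1 hi).1).le
    _ = ∑ k ∈ Iio j, ∑ i ∈ Iic k with σ i < σ j, x k :=
      sum_comm' fun i k ↦ by
        simp only [mem_below, mem_Iio, mem_Ico, mem_filter, mem_Iic]
        exact ⟨fun h ↦ ⟨⟨h.2.1, h.1.2⟩, h.2.2⟩, fun h ↦ ⟨⟨h.1.1.trans_lt h.2, h.1.2⟩, h.1.1, h.2⟩⟩
    _ = ∑ k ∈ Iio j, (#{i ∈ Iic k | σ i < σ j} : R) * x k := by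
      simp only [sum_const, nsmul_eq_mul]

end TailSum

section Coefficientwise

variable {ι R : Type*}

/-- The coefficientwise order on polynomials, which turns nonnegativity of all coefficients of `p`
into `0 ≤ p`. It is only activated locally, since `MvPolynomial` carries no canonical order. -/
abbrev coeffwisePartialOrder (ι R : Type*) [CommSemiring R] [PartialOrder R] :
    PartialOrder (MvPolynomial ι R) :=
  PartialOrder.lift (fun p c ↦ p.coeff c) fun _ _ h ↦ MvPolynomial.ext _ _ (congrFun h)

attribute [local instance] coeffwisePartialOrder

lemma coeffwise_le_iff [CommSemiring R] [PartialOrder R] {p q : MvPolynomial ι R} :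
    p ≤ q ↔ ∀ c, p.coeff c ≤ q.coeff c := Iff.rfl

lemma coeffwise_nonneg_iff [CommSemiring R] [PartialOrder R] {p : MvPolynomial ι R} :
    0 ≤ p ↔ ∀ c, 0 ≤ p.coeff c := by
  simp only [coeffwise_le_iff, MvPolynomial.coeff_zero]

lemma coeffwise_isOrderedRing [CommRing R] [PartialOrder R] [IsOrderedRing R] :
    IsOrderedRing (MvPolynomial ι R) := by
  classical
  have : IsOrderedAddMonoid (MvPolynomial ι R) :=
    { add_le_add_left := fun p q h r c ↦ by
        simpa only [MvPolynomial.coeff_add] using add_le_add_left (h c) (r.coeff c) }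
  have : ZeroLEOneClass (MvPolynomial ι R) :=
    ⟨coeffwise_nonneg_iff.2 fun c ↦ by
      rw [MvPolynomial.coeff_one]
      split_ifs <;> simp⟩
  refine IsOrderedRing.of_mul_nonneg fun p q hp hq ↦ coeffwise_nonneg_iff.2 fun c ↦ ?_
  rw [MvPolynomial.coeff_mul]
  exact sum_nonneg fun d _ ↦
    mul_nonneg (coeffwise_nonneg_iff.1 hp d.1) (coeffwise_nonneg_iff.1 hq d.2)

lemma coeffwise_X_nonneg [CommSemiring R] [PartialOrder R] [IsOrderedRing R] (i : ι) :
    0 ≤ (MvPolynomial.X i : MvPolynomial ι R) := by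
  classical
  refine coeffwise_nonneg_iff.2 fun c ↦ ?_
  rw [MvPolynomial.coeff_X]
  split_ifs <;> simp

lemma eval_nonneg_of_coeff_nonneg [CommSemiring R] [PartialOrder R] [IsOrderedRing R]
    {p : MvPolynomial ι R} (hp : ∀ c, 0 ≤ p.coeff c) {x : ι → R} (hx : ∀ i, 0 ≤ x i) :
    0 ≤ MvPolynomial.eval x p := by
  rw [MvPolynomial.eval_eq]
  exact sum_nonneg fun d _ ↦ mul_nonneg (hp d) (prod_nonneg fun i _ ↦ pow_nonneg (hx i) _)

end Coefficientwise

namespace Ppoly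

open MvPolynomial (X)

lemma eq_sum_tailSum (n : ℕ) (j : Fin n) :
    Ppoly n j = ∑ σ : Equiv.Perm (Fin n),
      (tailSum X j - ∑ i ∈ below (Iio j) j σ, (tailSum X i - tailSum X j)) *
        permMonomial (tailSum X) σ := by
  rw [Ppoly, ← Equiv.sum_comp (Equiv.mulLeft Fin.revPerm)]
  refine sum_congr rfl fun σ _ ↦ ?_
  have hexponent (l : Fin n) : n - 1 - (Fin.rev (σ l) : ℕ) = σ l := by
    rw [Fin.val_rev]
    omega
  rw [sum_below_tailSum_sub]
  simp only [Equiv.coe_mulLeft, Equiv.Perm.mul_apply, Fin.revPerm_apply, Fin.rev_lt_rev,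
    hexponent, permMonomial, tailSum]

lemma eq_sum_sub_sum (n : ℕ) (j : Fin n) :
    Ppoly n j =
      ∑ σ : Equiv.Perm (Fin n),
          ((#(below (Iio j) j σ) + 1 : ℕ) : MvPolynomial (Fin n) ℝ) *
            (tailSum X j * permMonomial (tailSum X) σ) -
        ∑ σ : Equiv.Perm (Fin n), ∑ i ∈ below (Iio j) j σ,
          tailSum X i * permMonomial (tailSum X) σ := by
  rw [eq_sum_tailSum, ← sum_sub_distrib]
  refine sum_congr rfl fun σ _ ↦ ?_
  rw [sum_sub_distrib, sum_const, nsmul_eq_mul, ← sum_mul]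
  push_cast
  ring

attribute [local instance] coeffwisePartialOrder

lemma coeff_nonneg (n : ℕ) (j : Fin n) (c : Fin n →₀ ℕ) : 0 ≤ (Ppoly n j).coeff c := by
  have := coeffwise_isOrderedRing (ι := Fin n) (R := ℝ)
  let y : Fin n → MvPolynomial (Fin n) ℝ := tailSum X
  have hy : Antitone y := antitone_tailSum coeffwise_X_nonneg
  have hchain : IsChain (· ≤ ·) (y '' (Iio j : Finset (Fin n))) := by
    rintro _ ⟨i, _, rfl⟩ _ ⟨k, _, rfl⟩ _
    exact (le_total k i).imp (hy ·) (hy ·)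
  have hle := sum_below_mul_permMonomial_le (tailSum_nonneg coeffwise_X_nonneg)
    notMem_Iio_self (fun i hi ↦ hy (mem_Iio.1 hi).le) hchain
  rw [eq_sum_sub_sum]
  exact coeffwise_nonneg_iff.1 (sub_nonneg.2 hle) c

end Ppoly

/-- all coefficients of `P` are nonnegative; in particular `P(x) ≥ 0`
for all `x` with nonnegative coordinates. -/
theorem stmt17 (n : ℕ) (hn : 2 ≤ n) (j : Fin n) (hj : 1 ≤ (j : ℕ)) :
    (∀ c : Fin n →₀ ℕ, 0 ≤ MvPolynomial.coeff c (Ppoly n j)) ∧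
    ∀ x : Fin n → ℝ, (∀ i, 0 ≤ x i) → 0 ≤ MvPolynomial.eval x (Ppoly n j) := by
  refine ⟨Ppoly.coeff_nonneg n j, fun x hx ↦ ?_⟩
  exact eval_nonneg_of_coeff_nonneg (Ppoly.coeff_nonneg n j) hx
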